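/- arXiv:math/0010234 — 2 statements merged into one kernel-verified Lean document; each statement's English description precedes it below -/
import Mathlib

section
/- There exists a nonempty compact subset X of the Hilbert cube [0,1]^ℕ that is hereditarily indecomposable and strongly infinite-dimensional, i.e., X possesses an infinite essential family of pairs of disjoint closed subsets. -/
open Set

/-- A space is *hereditarily indecomposable* if whenever two subcontinua
(nonempty compact connected subsets) intersect, one is contained in the other. -/
def HereditarilyIndecomposable (X : Type*) [TopologicalSpace X] : Prop :=
  ∀ C D : Set X, IsCompact C → IsConnected C → IsCompact D → IsConnected D →
    (C ∩ D).Nonempty → C ⊆ D ∨ D ⊆ C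

/-- `L` is a partition between `A` and `B`: a closed set whose complement is the
union of two disjoint open sets containing `A` and `B` respectively. -/
def IsPartitionBetween {X : Type*} [TopologicalSpace X] (L A B : Set X) : Prop :=
  IsClosed L ∧ ∃ U V : Set X, IsOpen U ∧ IsOpen V ∧ Disjoint U V ∧
    A ⊆ U ∧ B ⊆ V ∧ Lᶜ = U ∪ V

/-- A family of pairs of disjoint closed sets is *essential* if every choice of
partitions between the pairs has nonempty intersection. -/
def IsEssentialFamily {X : Type*} [TopologicalSpace X] {I : Type*} (A B : I → Set X) : Prop :=
  (∀ i, IsClosed (A i)) ∧ (∀ i, IsClosed (B i)) ∧ (∀ i, Disjoint (A i) (B i)) ∧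
    ∀ L : I → Set X, (∀ i, IsPartitionBetween (L i) (A i) (B i)) → (⋂ i, L i).Nonempty

/-!
The faces of a finite cube are an essential family by a mod 2 cohomological argument. Join
opposite faces of a fine grid by a layer of edges, the seam, to obtain a discrete torus. If `U i`
contains the face `x i = 0` and misses the face `x i = 1`, the coboundary of its indicator
function, corrected for the jump across the seam, represents the generator of the cohomology of
the `i`-th circle factor. The cup product of these classes is the fundamental class, so it is
nonzero on some small cube, which then meets each `U i` and its complement. Compactness extends
this to infinitely many pairs of faces.

Half of an infinite essential family remains essential on an intersection of partitions for the
other half, because partitions extend from closed subspaces. These partitions can be chosen crooked: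
level sets on which `g = zigzag ∘ h`. If `g` runs over a dense sequence of maps, some `g` nearly
separates any two continua `C`, `D` neither of which contains the other; along `C` it is small
somewhere and never large, along `D` it is large somewhere and never small. This confines `h` to the
lower part of `zigzag` on `C` and to its upper part on `D`, so `C` and `D` are disjoint.
-/

lemma exists_list_prod_eq_add_commutator {R κ : Type*} [Ring R] (S : Subring R) {D : R}
    {x y u : κ → R} (hx : ∀ i, x i ∈ S) (hy : ∀ i, y i ∈ S) (hu : ∀ i, u i ∈ S)
    (hDx : ∀ i, Commute D (x i)) (hDy : ∀ i, Commute D (y i))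
    (hxy : ∀ i, x i = y i + (D * u i - u i * D)) (l : List κ) :
    ∃ q ∈ S, (l.map x).prod = (l.map y).prod + (D * q - q * D) := by
  induction l with
  | nil => exact ⟨0, S.zero_mem, by simp⟩
  | cons i l ih =>
    obtain ⟨q, hq, hl⟩ := ih
    set X := (l.map x).prod with hX
    have hXS : X ∈ S := S.list_prod_mem (by simpa using fun j _ => hx j)
    have hDX : Commute D X := Commute.list_prod_right _ _ (by simpa using fun j _ => hDx j)
    have left_mul : y i * (D * q - q * D) = D * (y i * q) - y i * q * D := by
      rw [mul_sub, ← mul_assoc, ← (hDy i).eq, mul_assoc, mul_assoc]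
    have mul_right : (D * u i - u i * D) * X = D * (u i * X) - u i * X * D := by
      rw [sub_mul, mul_assoc (u i) D, hDX.eq, mul_assoc, mul_assoc]
    refine ⟨y i * q + u i * X, S.add_mem (S.mul_mem (hy i) hq) (S.mul_mem (hu i) hXS), ?_⟩
    calc (List.map x (i :: l)).prod
        = y i * X + (D * u i - u i * D) * X := by
          rw [List.map_cons, List.prod_cons, ← hX, hxy i, add_mul]
      _ = y i * (l.map y).prod + (D * (y i * q) - y i * q * D)
            + (D * (u i * X) - u i * X * D) := by
          rw [mul_right, hl, mul_add, left_mul]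
      _ = (List.map y (i :: l)).prod
            + (D * (y i * q + u i * X) - (y i * q + u i * X) * D) := by
          rw [List.map_cons, List.prod_cons, mul_add, add_mul]
          abel

lemma sum_sum_erase_eq_zero_of_symm {R κ : Type*} [Semiring R] [CharP R 2] [DecidableEq κ]
    (s : Finset κ) {F : κ → κ → R} (hF : ∀ j k, F j k = F k j) :
    ∑ j ∈ s, ∑ k ∈ s.erase j, F j k = 0 := by
  rw [Finset.sum_sigma']
  refine Finset.sum_involution (fun p _ => ⟨p.2, p.1⟩) ?_ ?_ ?_ ?_
  · intro p _
    rw [hF p.2 p.1, CharTwo.add_self_eq_zero]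
  · rintro ⟨j, k⟩ hp - heq
    exact (Finset.mem_erase.1 (Finset.mem_sigma.1 hp).2).1 (congrArg Sigma.fst heq)
  · intro p hp
    simp only [Finset.mem_sigma, Finset.mem_erase] at hp ⊢
    exact ⟨hp.2.2, hp.2.1.symm, hp.1⟩
  · exact fun _ _ => rfl

/-- Cubical cochains mod 2 on the discrete torus `(ℤ/N)^ι`: `m s v` is the value of `m` on the
cube with corner `v` whose edge directions are the elements of `s`. -/
abbrev TorusCochain (ι : Type*) (N : ℕ) := Finset ι → (ι → ZMod N) → ZMod 2

namespace TorusCochain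

variable {ι : Type*} {N : ℕ}

/-- Cup product with the 0-cochain `u`. -/
def cupZero (u : (ι → ZMod N) → ZMod 2) : Module.End (ZMod 2) (TorusCochain ι N) where
  toFun m s v := u v * m s v
  map_add' m m' := by
    ext s v
    simp only [Pi.add_apply, mul_add]
  map_smul' c m := by
    ext s v
    simp only [Pi.smul_apply, smul_eq_mul, RingHom.id_apply, mul_left_comm]

lemma cupZero_apply (u : (ι → ZMod N) → ZMod 2) (m : TorusCochain ι N) (s : Finset ι)
    (v : ι → ZMod N) : cupZero u m s v = u v * m s v := rfl

section Cup

variable [DecidableEq ι]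

/-- Left cup product with the 1-cochain `a`, where `a j v` is the value of `a` on the edge from `v`
to `v + e_j`. -/
def cup (a : ι → (ι → ZMod N) → ZMod 2) : Module.End (ZMod 2) (TorusCochain ι N) where
  toFun m s v := ∑ j ∈ s, a j v * m (s.erase j) (v + Pi.single j 1)
  map_add' m m' := by
    ext s v
    simp only [Pi.add_apply, mul_add, Finset.sum_add_distrib]
  map_smul' c m := by
    ext s v
    simp only [Pi.smul_apply, smul_eq_mul, RingHom.id_apply, Finset.mul_sum, mul_left_comm]

/-- Right cup product with the 1-cochain that is constantly `1`. -/
def cupRightOne : Module.End (ZMod 2) (TorusCochain ι N) where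
  toFun m s v := ∑ j ∈ s, m (s.erase j) v
  map_add' m m' := by
    ext s v
    simp only [Pi.add_apply, Finset.sum_add_distrib]
  map_smul' c m := by
    ext s v
    simp only [Pi.smul_apply, smul_eq_mul, RingHom.id_apply, Finset.mul_sum]

/-- The 0-cochain that is constantly `1`, the unit of the cup product. -/
def unit : TorusCochain ι N := fun s _ => if s = ∅ then 1 else 0

/-- The coboundary of a 0-cochain. -/
def coboundary (u : (ι → ZMod N) → ZMod 2) : ι → (ι → ZMod N) → ZMod 2 :=
  fun j v => u (v + Pi.single j 1) - u v

/-- The 1-cochain counting how often an edge crosses the seam between the levels `-1` and `0` of the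
`i`-th coordinate; it represents the generator of the cohomology of the `i`-th circle factor. -/
def seam (i : ι) : ι → (ι → ZMod N) → ZMod 2 :=
  fun j v => if j = i ∧ v i = -1 then 1 else 0

/-- The coboundary of `u` corrected by the seam of the `i`-th coordinate: if `u` jumps by `1` across
this seam, the correction cancels the jump, as if the torus had been cut open there. -/
def cutCoboundary (u : (ι → ZMod N) → ZMod 2) (i : ι) : ι → (ι → ZMod N) → ZMod 2 :=
  coboundary u + seam i

/-- The cocycle condition for a 1-cochain: the coboundary of `a` vanishes on every square. -/
def IsCocycle (a : ι → (ι → ZMod N) → ZMod 2) : Prop :=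
  ∀ j k v, j ≠ k → a j v + a k (v + Pi.single j 1) = a k v + a j (v + Pi.single k 1)

lemma cup_apply (a : ι → (ι → ZMod N) → ZMod 2) (m : TorusCochain ι N) (s : Finset ι)
    (v : ι → ZMod N) : cup a m s v = ∑ j ∈ s, a j v * m (s.erase j) (v + Pi.single j 1) := rfl

lemma cupRightOne_apply (m : TorusCochain ι N) (s : Finset ι) (v : ι → ZMod N) :
    cupRightOne m s v = ∑ j ∈ s, m (s.erase j) v := rfl

lemma cup_cutCoboundary (u : (ι → ZMod N) → ZMod 2) (i : ι) :
    cup (cutCoboundary u i) = cup (seam i) + (cup 1 * cupZero u - cupZero u * cup 1) := by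
  ext m s v
  simp only [cutCoboundary, coboundary, LinearMap.add_apply, LinearMap.sub_apply,
    Module.End.mul_apply, Pi.add_apply, Pi.sub_apply, cup_apply, cupZero_apply, Pi.one_apply,
    one_mul, Finset.mul_sum, ← Finset.sum_sub_distrib, ← Finset.sum_add_distrib]
  exact Finset.sum_congr rfl fun j _ => by ring

lemma isCocycle_seam (i : ι) : IsCocycle (seam i : ι → (ι → ZMod N) → ZMod 2) := by
  intro j k v hjk
  by_cases hj : j = i <;> by_cases hk : k = i <;> simp_all [seam, eq_comm]

lemma isCocycle_cutCoboundary (u : (ι → ZMod N) → ZMod 2) (i : ι) :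
    IsCocycle (cutCoboundary u i) := fun j k v hjk => by
  simp only [cutCoboundary, coboundary, Pi.add_apply, add_right_comm v (Pi.single k 1)]
  linear_combination isCocycle_seam i j k v hjk

lemma IsCocycle.commute_cup {a : ι → (ι → ZMod N) → ZMod 2} (ha : IsCocycle a) :
    Commute (cup 1) (cup a) := by
  ext m s v
  rw [← CharTwo.add_eq_zero]
  simp only [Module.End.mul_apply, cup_apply, Pi.one_apply, one_mul, Finset.mul_sum,
    ← Finset.sum_add_distrib]
  refine sum_sum_erase_eq_zero_of_symm s
    (F := fun j k => a k (v + Pi.single j 1) * m ((s.erase j).erase k)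
      (v + Pi.single j 1 + Pi.single k 1) + a j v * m ((s.erase j).erase k)
      (v + Pi.single j 1 + Pi.single k 1)) fun j k => ?_
  obtain rfl | hjk := eq_or_ne j k
  · rfl
  rw [Finset.erase_right_comm, add_right_comm v (Pi.single k 1), ← add_mul, ← add_mul,
    add_comm, ha j k v hjk, add_comm]

lemma commute_cupRightOne_cup (a : ι → (ι → ZMod N) → ZMod 2) : Commute cupRightOne (cup a) := by
  ext m s v
  simp only [Module.End.mul_apply, cup_apply, cupRightOne_apply, Finset.mul_sum]
  rw [Finset.sum_comm' (t' := s) (s' := fun k => s.erase k) fun j k => by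
    simp only [Finset.mem_erase]
    tauto]
  simp only [Finset.erase_right_comm]

lemma commute_cupRightOne_cupZero (u : (ι → ZMod N) → ZMod 2) :
    Commute cupRightOne (cupZero u) := by
  ext m s v
  simp only [Module.End.mul_apply, cupZero_apply, cupRightOne_apply, Finset.mul_sum]

lemma cup_one_unit : cup 1 (unit : TorusCochain ι N) = cupRightOne unit := by
  ext s v
  simp only [cup_apply, cupRightOne_apply, unit, Pi.one_apply, one_mul]

section Integral

variable [Fintype ι] [NeZero N]

/-- The sum of the values of a top-dimensional cochain over all unit cubes of the torus. -/
def integral : TorusCochain ι N →+ ZMod 2 :=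
  AddMonoidHom.mk' (fun m => ∑ v, m Finset.univ v) fun m m' => by
    simp only [Pi.add_apply, Finset.sum_add_distrib]

lemma integral_apply (m : TorusCochain ι N) : integral m = ∑ v, m Finset.univ v := rfl

lemma integral_cup_one (m : TorusCochain ι N) :
    integral (cup 1 m) = integral (cupRightOne m) := by
  simp only [integral_apply, cup_apply, cupRightOne_apply, Pi.one_apply, one_mul]
  rw [Finset.sum_comm, Finset.sum_comm (s := Finset.univ (α := ι → ZMod N))]
  refine Finset.sum_congr rfl fun j _ => ?_
  exact Equiv.sum_comp (Equiv.addRight (Pi.single j (1 : ZMod N))) (m (Finset.univ.erase j))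

/-- A mod 2 Stokes theorem: by translation invariance of the integral, the factor `1` can be moved
from the left end of a cup product to the right end, where it meets the unit. -/
lemma integral_commutator_unit {Q : Module.End (ZMod 2) (TorusCochain ι N)}
    (hQ : Commute cupRightOne Q) : integral (cup 1 (Q unit) - Q (cup 1 unit)) = 0 := by
  rw [map_sub, cup_one_unit, integral_cup_one, ← Module.End.mul_apply, ← Module.End.mul_apply,
    hQ.eq, sub_self]

lemma integral_prod_cutCoboundary (u : ι → (ι → ZMod N) → ZMod 2) (l : List ι) :
    integral ((l.map fun i => cup (cutCoboundary (u i) i)).prod unit) =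
      integral ((l.map fun i => cup (seam i : ι → (ι → ZMod N) → ZMod 2)).prod unit) := by
  obtain ⟨Q, hQ, heq⟩ := exists_list_prod_eq_add_commutator (Subring.centralizer {cupRightOne})
    (D := (cup 1 : Module.End (ZMod 2) (TorusCochain ι N)))
    (x := fun i => cup (cutCoboundary (u i) i)) (y := fun i => cup (seam i))
    (u := fun i => cupZero (u i))
    (fun i => by simpa [Subring.mem_centralizer_iff] using (commute_cupRightOne_cup _).eq)
    (fun i => by simpa [Subring.mem_centralizer_iff] using (commute_cupRightOne_cup _).eq)
    (fun i => by simpa [Subring.mem_centralizer_iff] using (commute_cupRightOne_cupZero _).eq)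
    (fun i => (isCocycle_cutCoboundary (u i) i).commute_cup)
    (fun i => (isCocycle_seam i).commute_cup)
    (fun i => cup_cutCoboundary (u i) i) l
  rw [heq, LinearMap.add_apply, map_add, LinearMap.sub_apply, Module.End.mul_apply,
    Module.End.mul_apply, integral_commutator_unit (Subring.mem_centralizer_iff.1 hQ _ rfl),
    add_zero]

end Integral

lemma prod_cup_seam_unit_apply {l : List ι} (hl : l.Nodup) (v : ι → ZMod N) :
    (l.map fun i => cup (seam i)).prod unit l.toFinset v = if ∀ i ∈ l, v i = -1 then 1 else 0 := by
  induction l generalizing v with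
  | nil => simp [unit]
  | cons i l ih =>
    obtain ⟨hi, hl⟩ := List.nodup_cons.1 hl
    have hv : (∀ j ∈ l, (v + Pi.single i 1 : ι → ZMod N) j = -1) ↔ ∀ j ∈ l, v j = -1 :=
      forall₂_congr fun j hj => by simp [ne_of_mem_of_not_mem hj hi]
    rw [List.map_cons, List.prod_cons, Module.End.mul_apply, cup_apply, List.toFinset_cons,
      Finset.sum_eq_single i (fun j _ hj => by simp [seam, hj]) (by simp),
      Finset.erase_insert (by simpa using hi), ih hl]
    simp only [hv, List.forall_mem_cons, seam, true_and, ite_and, ite_mul, one_mul, zero_mul]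

lemma integral_prod_seam [Fintype ι] [NeZero N] {l : List ι} (hl : l.Nodup) (hmem : ∀ i, i ∈ l) :
    integral ((l.map fun i => cup (seam i : ι → (ι → ZMod N) → ZMod 2)).prod unit) = 1 := by
  have huniv : Finset.univ = l.toFinset := by
    ext i
    simp [hmem i]
  simp only [integral_apply, huniv, prod_cup_seam_unit_apply hl, hmem, true_imp_iff]
  rw [Finset.sum_eq_single (fun _ => -1) (fun v _ hv => if_neg fun h => hv (funext h)) (by simp)]
  simp

/-- The vertices of the cube with corner `v` whose edge directions are the elements of `s`. -/
def cell (s : Finset ι) (v : ι → ZMod N) : Set (ι → ZMod N) :=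
  {x | ∀ i, x i = v i ∨ i ∈ s ∧ x i = v i + 1}

lemma cell_erase_add_single_subset {s : Finset ι} {j : ι} (hj : j ∈ s) (v : ι → ZMod N) :
    cell (s.erase j) (v + Pi.single j 1) ⊆ cell s v := by
  intro x hx i
  obtain rfl | hij := eq_or_ne i j
  · exact .inr ⟨hj, by simpa using hx i⟩
  · simpa [hij] using hx i

lemma add_single_mem_cell {s : Finset ι} {j : ι} (hj : j ∈ s) {v x : ι → ZMod N}
    (hx : x ∈ cell (s.erase j) v) : x + Pi.single j 1 ∈ cell s v := by
  intro i
  obtain rfl | hij := eq_or_ne i j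
  · exact .inr ⟨hj, by simpa using hx i⟩
  · simpa [hij] using hx i

lemma exists_edge_of_prod_cup_unit_ne_zero (a : ι → ι → (ι → ZMod N) → ZMod 2) {l : List ι}
    {s : Finset ι} {v : ι → ZMod N} (h : (l.map fun i => cup (a i)).prod unit s v ≠ 0) {i : ι}
    (hi : i ∈ l) : ∃ j ∈ s, ∃ x ∈ cell (s.erase j) v, a i j x ≠ 0 := by
  induction l generalizing s v with
  | nil => simp at hi
  | cons i' l ih =>
    rw [List.map_cons, List.prod_cons, Module.End.mul_apply, cup_apply] at h
    obtain ⟨k, hk, hmul⟩ := Finset.exists_ne_zero_of_sum_ne_zero h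
    rcases List.mem_cons.1 hi with rfl | hi
    · exact ⟨k, hk, v, fun _ => .inl rfl, left_ne_zero_of_mul hmul⟩
    · obtain ⟨j, hj, x, hx, hax⟩ := ih (right_ne_zero_of_mul hmul) hi
      obtain ⟨hjk, hj⟩ := Finset.mem_erase.1 hj
      rw [Finset.erase_right_comm] at hx
      exact ⟨j, hj, x, cell_erase_add_single_subset (Finset.mem_erase.2 ⟨hjk.symm, hk⟩) v hx, hax⟩

lemma cutCoboundary_eq_zero {u : (ι → ZMod N) → ZMod 2} {i : ι}
    (h0 : ∀ x, x i = 0 → u x = 1) (h1 : ∀ x, x i = -1 → u x = 0) {j : ι} {x : ι → ZMod N}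
    (hx : x i = -1 ∨ j ≠ i ∧ x i = 0) : cutCoboundary u i j x = 0 := by
  obtain rfl | hji := eq_or_ne j i
  · have hxj : x j = -1 := hx.resolve_right fun h => h.1 rfl
    simp [cutCoboundary, coboundary, seam, h0 (x + Pi.single j 1) (by simp [hxj]), h1 x hxj, hxj,
      CharTwo.add_self_eq_zero]
  · have hstep : (x + Pi.single j 1 : ι → ZMod N) i = x i := by simp [hji.symm]
    rcases hx with hx | ⟨-, hx⟩
    · simp [cutCoboundary, coboundary, seam, hji, h1 x hx, h1 _ (hstep.trans hx)]
    · simp [cutCoboundary, coboundary, seam, hji, h0 x hx, h0 _ (hstep.trans hx)]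

end Cup

theorem exists_cell_forall_mem_notMem [Fintype ι] [NeZero N] (U : ι → Set (ι → ZMod N))
    (h0 : ∀ i x, x i = 0 → x ∈ U i) (h1 : ∀ i x, x i = -1 → x ∉ U i) :
    ∃ v : ι → ZMod N, (∀ i, v i ≠ -1) ∧
      ∀ i, (∃ x ∈ cell Finset.univ v, x ∈ U i) ∧ ∃ x ∈ cell Finset.univ v, x ∉ U i := by
  classical
  set u : ι → (ι → ZMod N) → ZMod 2 := fun i x => if x ∈ U i then 1 else 0
  obtain ⟨v, -, hv⟩ : ∃ v ∈ Finset.univ, (Finset.univ.toList.map fun i =>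
      cup (cutCoboundary (u i) i)).prod unit Finset.univ v ≠ 0 := by
    refine Finset.exists_ne_zero_of_sum_ne_zero ?_
    rw [← integral_apply, integral_prod_cutCoboundary,
      integral_prod_seam (Finset.nodup_toList _) (by simp)]
    exact one_ne_zero
  have hedge (i : ι) : ∃ j ∈ Finset.univ, ∃ x ∈ cell (Finset.univ.erase j) v,
      cutCoboundary (u i) i j x ≠ 0 :=
    exists_edge_of_prod_cup_unit_ne_zero _ hv (Finset.mem_toList.2 (Finset.mem_univ i))
  have hne (i : ι) : v i ≠ -1 := by
    intro hvi
    obtain ⟨j, -, x, hx, hjx⟩ := hedge i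
    refine hjx (cutCoboundary_eq_zero (fun x hx => if_pos (h0 i x hx))
      (fun x hx => if_neg (h1 i x hx)) ?_)
    simpa [hvi, eq_comm] using hx i
  refine ⟨v, hne, fun i => ?_⟩
  obtain ⟨j, hj, x, hx, hjx⟩ := hedge i
  have hseam : seam i j x = 0 := if_neg fun ⟨hji, hxi⟩ =>
    hne i (by simpa [hji, hxi, eq_comm] using hx i)
  have hmem : x + Pi.single j 1 ∈ cell Finset.univ v := add_single_mem_cell hj hx
  have hmem' : x ∈ cell Finset.univ v := fun i => (hx i).imp_right fun h => ⟨Finset.mem_univ i, h.2⟩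
  rw [cutCoboundary, Pi.add_apply, Pi.add_apply, hseam, add_zero, coboundary, sub_ne_zero] at hjx
  by_cases hxU : x ∈ U i <;> by_cases hxU' : x + Pi.single j 1 ∈ U i <;>
    simp [u, hxU, hxU'] at hjx
  · exact ⟨⟨x, hmem', hxU⟩, _, hmem, hxU'⟩
  · exact ⟨⟨_, hmem, hxU'⟩, x, hmem', hxU⟩

end TorusCochain

/-- The point `k / (n + 1)` of the unit interval, for `k : ZMod (n + 2)` represented by an element
of `{0, …, n + 1}`. -/
noncomputable def gridCoord (n : ℕ) (k : ZMod (n + 2)) : unitInterval :=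
  ⟨k.val / (n + 1 : ℕ), unitInterval.div_mem (Nat.cast_nonneg _) (Nat.cast_nonneg _)
    (Nat.cast_le.2 (Nat.lt_succ_iff.1 k.val_lt))⟩

lemma coe_gridCoord (n : ℕ) (k : ZMod (n + 2)) : (gridCoord n k : ℝ) = k.val / (n + 1 : ℕ) := rfl

lemma gridCoord_zero (n : ℕ) : gridCoord n 0 = 0 :=
  Subtype.ext (by simp [coe_gridCoord])

lemma gridCoord_neg_one (n : ℕ) : gridCoord n (-1) = 1 :=
  Subtype.ext <| by
    rw [coe_gridCoord, ZMod.val_neg_one]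
    exact div_self (Nat.cast_ne_zero.2 n.succ_ne_zero)

lemma dist_gridCoord_add_one {n : ℕ} {k : ZMod (n + 2)} (hk : k ≠ -1) :
    dist (gridCoord n (k + 1)) (gridCoord n k) = 1 / (n + 1) := by
  have hval : (k + 1).val = k.val + 1 := by
    have hne : k.val ≠ n + 1 := by
      rw [← ZMod.val_neg_one (n + 1)]
      exact fun h => hk (ZMod.val_injective _ h)
    have hone : (1 : ZMod (n + 2)).val = 1 := ZMod.val_one'' (by lia)
    have hlt := k.val_lt
    rw [ZMod.val_add_of_lt (by lia), hone]
  rw [Subtype.dist_eq, Real.dist_eq, coe_gridCoord, coe_gridCoord, hval, ← sub_div, Nat.cast_succ,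
    add_sub_cancel_left, abs_of_nonneg (by positivity), Nat.cast_succ]

lemma dist_gridCoord_comp_le {ι : Type*} [Fintype ι] {n : ℕ} {v x : ι → ZMod (n + 2)}
    (hv : ∀ i, v i ≠ -1) (hx : x ∈ TorusCochain.cell Finset.univ v) :
    dist (gridCoord n ∘ x) (gridCoord n ∘ v) ≤ 1 / (n + 1) := by
  refine (dist_pi_le_iff (by positivity)).2 fun i => ?_
  rcases hx i with h | ⟨-, h⟩
  · rw [Function.comp_apply, Function.comp_apply, h, dist_self]
    positivity
  · rw [Function.comp_apply, Function.comp_apply, h, dist_gridCoord_add_one (hv i)]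

lemma exists_forall_ball_not_subset {ι : Type*} [Fintype ι] {U : ι → Set (ι → unitInterval)}
    (h0 : ∀ i, {x | x i = 0} ⊆ U i) (h1 : ∀ i, Disjoint {x | x i = 1} (U i)) {ε : ℝ} (hε : 0 < ε) :
    ∃ x : ι → unitInterval, ∀ i, (Metric.ball x ε ∩ U i).Nonempty ∧ ¬ Metric.ball x ε ⊆ U i := by
  obtain ⟨n, hn⟩ := exists_nat_one_div_lt hε
  obtain ⟨v, hv, hcell⟩ := TorusCochain.exists_cell_forall_mem_notMem
    (fun i => {x : ι → ZMod (n + 2) | gridCoord n ∘ x ∈ U i})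
    (fun i x hx => h0 i (by simp [hx, gridCoord_zero]))
    (fun i x hx => (h1 i).notMem_of_mem_left (by simp [hx, gridCoord_neg_one]))
  have hball {x : ι → ZMod (n + 2)} (hx : x ∈ TorusCochain.cell Finset.univ v) :
      gridCoord n ∘ x ∈ Metric.ball (gridCoord n ∘ v) ε :=
    Metric.mem_ball.2 ((dist_gridCoord_comp_le hv hx).trans_lt hn)
  refine ⟨gridCoord n ∘ v, fun i => ?_⟩
  obtain ⟨⟨x, hx, hxU⟩, y, hy, hyU⟩ := hcell i
  exact ⟨⟨_, hball hx, hxU⟩, fun hsub => hyU (hsub (hball hy))⟩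

lemma isClosed_face {ι : Type*} (a : unitInterval) (i : ι) :
    IsClosed {x : ι → unitInterval | x i = a} :=
  isClosed_eq (continuous_apply i) continuous_const

lemma disjoint_faces {ι : Type*} (i : ι) :
    Disjoint {x : ι → unitInterval | x i = 0} {x | x i = 1} :=
  disjoint_left.2 fun _ h0 h1 => zero_ne_one (h0.symm.trans h1)

theorem isEssentialFamily_faces_of_finite (ι : Type*) [Finite ι] :
    IsEssentialFamily (fun i : ι => {x : ι → unitInterval | x i = 0}) (fun i => {x | x i = 1}) := by
  cases nonempty_fintype ι
  refine ⟨isClosed_face 0, isClosed_face 1, disjoint_faces, fun L hL => ?_⟩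
  choose _ U V hU hV hUV h0 h1 hL using hL
  by_contra hne
  have hcover : univ ⊆ ⋃ p : ι × Bool, cond p.2 (U p.1) (V p.1) := fun x _ => by
    obtain ⟨i, hi⟩ : ∃ i, x ∉ L i := by
      simpa using fun h => hne ⟨x, h⟩
    rw [← mem_compl_iff, hL] at hi
    exact hi.elim (fun h => mem_iUnion.2 ⟨(i, true), h⟩) fun h => mem_iUnion.2 ⟨(i, false), h⟩
  obtain ⟨ε, hε, hball⟩ := lebesgue_number_lemma_of_metric isCompact_univ
    (by rintro ⟨i, _ | _⟩ <;> simp [hU, hV]) hcover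
  obtain ⟨x, hx⟩ := exists_forall_ball_not_subset h0
    (fun i => (hUV i).symm.mono_left (h1 i)) hε
  obtain ⟨⟨i, _ | _⟩, hsub⟩ := hball x (mem_univ x)
  · exact (hx i).1.not_disjoint ((hUV i).symm.mono_left hsub)
  · exact (hx i).2 hsub

section EssentialFamily

variable {X Y ι κ : Type*} [TopologicalSpace X] [TopologicalSpace Y]

lemma IsPartitionBetween.preimage {L A B : Set Y} (hL : IsPartitionBetween L A B) {f : X → Y}
    (hf : Continuous f) : IsPartitionBetween (f ⁻¹' L) (f ⁻¹' A) (f ⁻¹' B) := by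
  obtain ⟨hLc, U, V, hU, hV, hUV, hA, hB, hLUV⟩ := hL
  exact ⟨hLc.preimage hf, f ⁻¹' U, f ⁻¹' V, hU.preimage hf, hV.preimage hf, hUV.preimage f,
    preimage_mono hA, preimage_mono hB, by rw [← preimage_compl, hLUV, preimage_union]⟩

lemma isPartitionBetween_setOf_eq {R : Type*} [LinearOrder R] [TopologicalSpace R]
    [OrderClosedTopology R] {f g : X → R} (hf : Continuous f) (hg : Continuous g) {A B : Set X}
    (hA : ∀ x ∈ A, f x < g x) (hB : ∀ x ∈ B, g x < f x) :
    IsPartitionBetween {x | f x = g x} A B :=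
  ⟨isClosed_eq hf hg, {x | f x < g x}, {x | g x < f x}, isOpen_lt hf hg, isOpen_lt hg hf,
    disjoint_left.2 fun _ => lt_asymm, hA, hB, ext fun _ => lt_or_lt_iff_ne.symm⟩

lemma disjoint_closure_union_image {f : X → Y}
    (hf : Topology.IsClosedEmbedding f) {A B : Set Y} {U V : Set X} (hA : IsClosed A)
    (hV : IsOpen V) (hAB : Disjoint A B) (hUV : Disjoint U V) (hAU : f ⁻¹' A ⊆ U)
    (hBV : f ⁻¹' B ⊆ V) : Disjoint (closure (A ∪ f '' U)) (B ∪ f '' V) := by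
  have hUV' : Disjoint (closure U) V := hUV.closure_left hV
  rw [closure_union, hA.closure_eq, hf.closure_image_eq, disjoint_union_left, disjoint_union_right,
    disjoint_union_right, disjoint_image_right, disjoint_image_left,
    disjoint_image_iff hf.injective]
  exact ⟨⟨hAB, hUV.mono_left hAU⟩, hUV'.mono_right hBV, hUV'⟩

lemma IsPartitionBetween.exists_extension [CompletelyNormalSpace Y] {f : X → Y}
    (hf : Topology.IsClosedEmbedding f) {A B : Set Y} (hA : IsClosed A) (hB : IsClosed B)
    (hAB : Disjoint A B) {L : Set X} (hL : IsPartitionBetween L (f ⁻¹' A) (f ⁻¹' B)) :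
    ∃ M, IsPartitionBetween M A B ∧ f ⁻¹' M ⊆ L := by
  obtain ⟨-, U, V, hU, hV, hUV, hAU, hBV, hLUV⟩ := hL
  obtain ⟨U', V', hU', hV', hUU', hVV', hUV'⟩ := separatedNhds_iff_disjoint.2 <|
    CompletelyNormalSpace.completely_normal
      (disjoint_closure_union_image hf hA hV hAB hUV hAU hBV)
      (disjoint_closure_union_image hf hB hU hAB.symm hUV.symm hBV hAU).symm
  refine ⟨(U' ∪ V')ᶜ, ⟨(hU'.union hV').isClosed_compl, U', V', hU', hV', hUV',
    subset_union_left.trans hUU', subset_union_left.trans hVV', compl_compl _⟩, ?_⟩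
  rw [preimage_compl, compl_subset_comm, hLUV, ← image_subset_iff, image_union]
  exact union_subset_union (subset_union_right.trans hUU') (subset_union_right.trans hVV')

namespace IsEssentialFamily

lemma nonempty {A B : ι → Set X} (h : IsEssentialFamily A B) : Nonempty X := by
  by_contra hX
  rw [not_nonempty_iff] at hX
  obtain ⟨x, -⟩ := h.2.2.2 (fun _ => ∅) fun i => ⟨isClosed_empty, ∅, ∅, isOpen_empty, isOpen_empty,
    disjoint_empty ∅, (A i).eq_empty_of_isEmpty.subset, (B i).eq_empty_of_isEmpty.subset,
    Subsingleton.elim _ _⟩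
  exact hX.false x

lemma comp_equiv {A B : ι → Set X} (h : IsEssentialFamily A B) (e : κ ≃ ι) :
    IsEssentialFamily (A ∘ e) (B ∘ e) := by
  refine ⟨fun k => h.1 (e k), fun k => h.2.1 (e k), fun k => h.2.2.1 (e k), fun L hL => ?_⟩
  rw [← e.symm.surjective.iInter_comp]
  exact h.2.2.2 _ fun i => by simpa using hL (e.symm i)

lemma of_preimage {A B : ι → Set Y} {f : X → Y} (hf : Continuous f) (hA : ∀ i, IsClosed (A i))
    (hB : ∀ i, IsClosed (B i)) (hAB : ∀ i, Disjoint (A i) (B i))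
    (h : IsEssentialFamily (fun i => f ⁻¹' A i) (fun i => f ⁻¹' B i)) : IsEssentialFamily A B :=
  ⟨hA, hB, hAB, fun L hL => by
    obtain ⟨x, hx⟩ := h.2.2.2 _ fun i => (hL i).preimage hf
    exact ⟨f x, mem_iInter.2 fun i => mem_iInter.1 hx i⟩⟩

lemma of_finset [CompactSpace X] {A B : ι → Set X}
    (h : ∀ s : Finset ι, IsEssentialFamily (fun i : s => A i) (fun i : s => B i)) :
    IsEssentialFamily A B := by
  have mem (i : ι) : i ∈ ({i} : Finset ι) := Finset.mem_singleton_self i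
  refine ⟨fun i => (h {i}).1 ⟨i, mem i⟩, fun i => (h {i}).2.1 ⟨i, mem i⟩,
    fun i => (h {i}).2.2.1 ⟨i, mem i⟩, fun L hL => ?_⟩
  by_contra hne
  obtain ⟨s, hs⟩ := isCompact_univ.elim_finite_subfamily_closed L (fun i => (hL i).1)
    (by rwa [univ_inter, ← not_nonempty_iff_eq_empty])
  obtain ⟨x, hx⟩ := (h s).2.2.2 (fun i => L i) fun i => hL i
  exact hs.le ⟨mem_univ x, by simpa using hx⟩

lemma restrict_iInter [CompletelyNormalSpace X] {A B : ι ⊕ κ → Set X} (h : IsEssentialFamily A B)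
    {M : κ → Set X} (hM : ∀ k, IsPartitionBetween (M k) (A (.inr k)) (B (.inr k))) :
    IsEssentialFamily (fun i => ((↑) ⁻¹' A (.inl i) : Set ↥(⋂ k, M k)))
      (fun i => (↑) ⁻¹' B (.inl i)) := by
  have hval : Topology.IsClosedEmbedding ((↑) : ↥(⋂ k, M k) → X) :=
    (isClosed_iInter fun k => (hM k).1).isClosedEmbedding_subtypeVal
  refine ⟨fun i => (h.1 _).preimage hval.continuous, fun i => (h.2.1 _).preimage hval.continuous,
    fun i => (h.2.2.1 _).preimage _, fun L hL => ?_⟩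
  choose L' hL' hsub using fun i =>
    (hL i).exists_extension hval (h.1 (.inl i)) (h.2.1 (.inl i)) (h.2.2.1 (.inl i))
  obtain ⟨x, hx⟩ := h.2.2.2 (Sum.elim L' M) (Sum.forall.2 ⟨hL', hM⟩)
  rw [mem_iInter, Sum.forall] at hx
  exact ⟨⟨x, mem_iInter.2 hx.2⟩, mem_iInter.2 fun i => hsub i (hx.1 i)⟩

end IsEssentialFamily

end EssentialFamily

theorem isEssentialFamily_faces (ι : Type*) :
    IsEssentialFamily (fun i : ι => {x : ι → unitInterval | x i = 0}) (fun i => {x | x i = 1}) := by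
  classical
  refine .of_finset fun s => ?_
  set f : (s → unitInterval) → ι → unitInterval := fun x i => if h : i ∈ s then x ⟨i, h⟩ else 0
  have hf : Continuous f := continuous_pi fun i => by
    by_cases h : i ∈ s <;> simp only [f, h, dite_true, dite_false] <;> fun_prop
  refine .of_preimage hf (fun i => isClosed_face 0 i.1) (fun i => isClosed_face 1 i.1)
    (fun i => disjoint_faces i.1) ?_
  simpa [f] using isEssentialFamily_faces_of_finite s

lemma forall_mem_lt_of_isPreconnected {X R : Type*} [TopologicalSpace X] [LinearOrder R]
    [TopologicalSpace R] [OrderClosedTopology R] {C : Set X} (hC : IsPreconnected C) {h : X → R}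
    (hh : Continuous h) {a : R} (ha : ∀ x ∈ C, h x ≠ a) {c : X} (hc : c ∈ C) (hca : h c < a) :
    ∀ x ∈ C, h x < a := by
  intro x hx
  by_contra! hax
  obtain ⟨y, hy, hya⟩ := hC.intermediate_value hc hx hh.continuousOn ⟨hca.le, hax⟩
  exact ha y hy hya

/-- The piecewise linear function rising from `zigzag 0 < 0` to `zigzag (1 / 4) = 3 / 4`, then
falling to `zigzag (3 / 4) = 1 / 4` and rising again to `1 < zigzag 1`. -/
noncomputable def zigzag (t : ℝ) : ℝ := max (min (4 * t - 1 / 4) (1 - t)) (4 * t - 11 / 4)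

lemma continuous_zigzag : Continuous zigzag := by
  unfold zigzag
  fun_prop

lemma zigzag_zero_lt : zigzag 0 < 0 := by norm_num [zigzag]

lemma one_lt_zigzag_one : 1 < zigzag 1 := by norm_num [zigzag]

lemma zigzag_one_div_four : zigzag (1 / 4) = 3 / 4 := by norm_num [zigzag]

lemma zigzag_three_div_four : zigzag (3 / 4) = 1 / 4 := by norm_num [zigzag]

lemma lt_one_div_four_of_zigzag_lt {t : ℝ} (ht : zigzag t < 1 / 4) : t < 1 / 4 := by
  grind [zigzag]

lemma three_div_four_lt_of_lt_zigzag {t : ℝ} (ht : 3 / 4 < zigzag t) : 3 / 4 < t := by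
  grind [zigzag]

section CrookedLayer

variable {X : Type*} [TopologicalSpace X]

/-- A crooked partition: on each of its connected subsets, the function `h` has to follow the three
monotone pieces of `zigzag` as `g` varies. -/
def crookedLayer (g : C(X, unitInterval)) (h : C(X, ℝ)) : Set X := {x | zigzag (h x) = g x}

lemma isPartitionBetween_crookedLayer (g : C(X, unitInterval)) {h : C(X, ℝ)} {A B : Set X}
    (hA : EqOn h 0 A) (hB : EqOn h 1 B) : IsPartitionBetween (crookedLayer g h) A B := by
  refine isPartitionBetween_setOf_eq (continuous_zigzag.comp h.continuous) (by fun_prop)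
    (fun x hx => ?_) fun x hx => ?_
  · rw [Function.comp_apply, hA hx]
    exact zigzag_zero_lt.trans_le (g x).2.1
  · rw [Function.comp_apply, hB hx]
    exact (g x).2.2.trans_lt one_lt_zigzag_one

lemma disjoint_of_subset_crookedLayer {g : C(X, unitInterval)} {h : C(X, ℝ)} {C D : Set X}
    (hC : IsPreconnected C) (hD : IsPreconnected D) (hCL : C ⊆ crookedLayer g h)
    (hDL : D ⊆ crookedLayer g h) (hgC : ∀ x ∈ C, (g x : ℝ) < 3 / 4)
    (hgD : ∀ x ∈ D, 1 / 4 < (g x : ℝ)) {c d : X} (hc : c ∈ C) (hgc : (g c : ℝ) < 1 / 4)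
    (hd : d ∈ D) (hgd : 3 / 4 < (g d : ℝ)) : Disjoint C D := by
  have hhC : ∀ x ∈ C, h x < 1 / 4 := by
    refine forall_mem_lt_of_isPreconnected hC h.continuous (fun x hx hhx => ?_) hc
      (lt_one_div_four_of_zigzag_lt ((hCL hc).trans_lt hgc))
    exact (hgC x hx).ne' (zigzag_one_div_four.symm.trans (hhx ▸ hCL hx))
  have hhD : ∀ x ∈ D, 3 / 4 < h x := by
    refine forall_mem_lt_of_isPreconnected (R := ℝᵒᵈ) hD h.continuous (fun x hx hhx => ?_) hd
      (three_div_four_lt_of_lt_zigzag (hgd.trans_eq (hDL hd).symm))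
    replace hhx : h x = 3 / 4 := hhx
    exact (hgD x hx).ne (zigzag_three_div_four.symm.trans (hhx ▸ hDL hx))
  exact disjoint_left.2 fun x hxC hxD => by linarith [hhC x hxC, hhD x hxD]

lemma exists_continuousMap_separating [T4Space X] {C D : Set X} (hC : IsClosed C) (hD : IsClosed D)
    {c d : X} (hc : c ∈ C) (hd : d ∈ D) (hcD : c ∉ D) (hdC : d ∉ C) :
    ∃ g : C(X, unitInterval), (g c : ℝ) = 0 ∧ (g d : ℝ) = 1 ∧
      (∀ x ∈ C, (g x : ℝ) ≤ 1 / 2) ∧ ∀ x ∈ D, 1 / 2 ≤ (g x : ℝ) := by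
  obtain ⟨u, hu0, hu1, hu⟩ :=
    exists_continuous_zero_one_of_isClosed isClosed_singleton hD (disjoint_singleton_left.2 hcD)
  obtain ⟨w, hw0, hw1, hw⟩ :=
    exists_continuous_zero_one_of_isClosed hC isClosed_singleton (disjoint_singleton_right.2 hdC)
  have hmem (x : X) : (u x + w x) / 2 ∈ unitInterval :=
    ⟨by linarith [(hu x).1, (hw x).1], by linarith [(hu x).2, (hw x).2]⟩
  refine ⟨⟨fun x => ⟨(u x + w x) / 2, hmem x⟩, by fun_prop⟩, ?_, ?_, fun x hx => ?_, fun x hx => ?_⟩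
  · simp [hu0 (mem_singleton c), hw0 hc]
  · simp [hu1 hd, hw1 (mem_singleton d)]
  · simpa [hw0 hx] using div_le_div_of_nonneg_right (hu x).2 zero_le_two
  · simpa [hu1 hx, add_div] using div_nonneg (hw x).1 zero_le_two

lemma exists_separating_of_denseRange [T4Space X] {κ : Type*} {g : κ → C(X, unitInterval)}
    (hg : DenseRange g) {C D : Set X} (hC : IsCompact C) (hD : IsCompact D) {c d : X} (hc : c ∈ C)
    (hd : d ∈ D) (hcD : c ∉ D) (hdC : d ∉ C) :
    ∃ k, (g k c : ℝ) < 1 / 4 ∧ 3 / 4 < (g k d : ℝ) ∧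
      (∀ x ∈ C, (g k x : ℝ) < 3 / 4) ∧ ∀ x ∈ D, 1 / 4 < (g k x : ℝ) := by
  obtain ⟨f, hfc, hfd, hfC, hfD⟩ :=
    exists_continuousMap_separating hC.isClosed hD.isClosed hc hd hcD hdC
  have isOpen_mapsTo_lt (a : ℝ) {K : Set X} (hK : IsCompact K) :
      IsOpen {g : C(X, unitInterval) | MapsTo g K {t | (t : ℝ) < a}} :=
    ContinuousMap.isOpen_setOfPred_mapsTo hK (isOpen_lt continuous_subtype_val continuous_const)
  have isOpen_mapsTo_gt (a : ℝ) {K : Set X} (hK : IsCompact K) :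
      IsOpen {g : C(X, unitInterval) | MapsTo g K {t | a < (t : ℝ)}} :=
    ContinuousMap.isOpen_setOfPred_mapsTo hK (isOpen_lt continuous_const continuous_subtype_val)
  obtain ⟨k, ⟨hkc, hkd⟩, hkC, hkD⟩ := hg.exists_mem_open
    (((isOpen_mapsTo_lt (1 / 4) isCompact_singleton).inter
      (isOpen_mapsTo_gt (3 / 4) isCompact_singleton)).inter
      ((isOpen_mapsTo_lt (3 / 4) hC).inter (isOpen_mapsTo_gt (1 / 4) hD)))
    ⟨f, ⟨mapsTo_singleton.2 (show (f c : ℝ) < 1 / 4 by norm_num [hfc]),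
        mapsTo_singleton.2 (show 3 / 4 < (f d : ℝ) by norm_num [hfd])⟩,
      fun x hx => (hfC x hx).trans_lt (by norm_num),
      fun x hx => (show (1 / 4 : ℝ) < 1 / 2 by norm_num).trans_le (hfD x hx)⟩
  exact ⟨k, hkc rfl, hkd rfl, hkC, hkD⟩

theorem hereditarilyIndecomposable_iInter_crookedLayer [T4Space X] {κ : Type*}
    {g : κ → C(X, unitInterval)} (hg : DenseRange g) (h : κ → C(X, ℝ)) :
    HereditarilyIndecomposable ↥(⋂ k, crookedLayer (g k) (h k)) := by
  intro C D hC hC' hD hD' hCD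
  by_contra! hsub
  obtain ⟨c, hc, hcD⟩ := not_subset.1 hsub.1
  obtain ⟨d, hd, hdC⟩ := not_subset.1 hsub.2
  obtain ⟨k, hgc, hgd, hgC, hgD⟩ := exists_separating_of_denseRange hg
    (hC.image continuous_subtype_val) (hD.image continuous_subtype_val) (mem_image_of_mem _ hc)
    (mem_image_of_mem _ hd) (Subtype.val_injective.mem_set_image.not.2 hcD)
    (Subtype.val_injective.mem_set_image.not.2 hdC)
  have subset_layer (E : Set ↥(⋂ k, crookedLayer (g k) (h k))) :
      Subtype.val '' E ⊆ crookedLayer (g k) (h k) :=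
    image_subset_iff.2 fun x _ => mem_iInter.1 x.2 k
  refine hCD.not_disjoint ((disjoint_image_iff Subtype.val_injective).1 ?_)
  exact disjoint_of_subset_crookedLayer
    (hC'.isPreconnected.image _ continuous_subtype_val.continuousOn)
    (hD'.isPreconnected.image _ continuous_subtype_val.continuousOn) (subset_layer C)
    (subset_layer D) hgC hgD (mem_image_of_mem _ hc) hgc (mem_image_of_mem _ hd) hgd

end CrookedLayer

theorem exists_stronglyInfiniteDimensional_hereditarilyIndecomposable_general {X : Type*}
    [TopologicalSpace X] [CompactSpace X] [T2Space X] [SecondCountableTopology X]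
    {A B : ℕ → Set X} (hAB : IsEssentialFamily A B) :
    ∃ Z : Set X, Z.Nonempty ∧ IsCompact Z ∧ HereditarilyIndecomposable ↥Z ∧
      ∃ A' B' : ℕ → Set ↥Z, IsEssentialFamily A' B' := by
  replace hAB := hAB.comp_equiv Equiv.natSumNatEquivNat
  choose h hA hB _ using fun k : ℕ =>
    exists_continuous_zero_one_of_isClosed (hAB.1 (.inr k)) (hAB.2.1 (.inr k)) (hAB.2.2.1 (.inr k))
  set g := TopologicalSpace.denseSeq C(X, unitInterval)
  have hlayer (k : ℕ) := isPartitionBetween_crookedLayer (g k) (hA k) (hB k)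
  have hZ := hAB.restrict_iInter hlayer
  exact ⟨⋂ k, crookedLayer (g k) (h k), nonempty_coe_sort.1 hZ.nonempty,
    (isClosed_iInter fun k => (hlayer k).1).isCompact,
    hereditarilyIndecomposable_iInter_crookedLayer (TopologicalSpace.denseRange_denseSeq _) h,
    _, _, hZ⟩

/-- There is a nonempty compact hereditarily indecomposable subset of the Hilbert cube
that is strongly infinite-dimensional. -/
theorem exists_stronglyInfiniteDimensional_hereditarilyIndecomposable :
    ∃ X : Set (ℕ → unitInterval), X.Nonempty ∧ IsCompact X ∧
      HereditarilyIndecomposable ↥X ∧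
      ∃ A B : ℕ → Set ↥X, IsEssentialFamily A B :=
  exists_stronglyInfiniteDimensional_hereditarilyIndecomposable_general (isEssentialFamily_faces ℕ)
end

section
/- For every infinite cardinal κ there exist a subcontinuum U of the Tychonoff cube [0,1]^κ of covering dimension at most one and a monotone continuous surjection m : U → [0,1]^κ. -/
open Set

/-!
A direction of `x ∈ ℝ²` is a sup-norm unit vector `w` with `‖x‖ • w = x`: there is one direction
if `x ≠ 0`, and every unit vector is a direction of `0`, so the directions of `x` always form a
connected set. Let `X` be the space of all assignments `v` of points of `[-1,1]²` to the formal
terms in `κ` variables, with operations `ω n k` of arity `n`, such that `v (ω n k t₁ … tₙ)` is a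
direction of `φ n k (v t₁, …, v tₙ)`, where `φ n 0, φ n 1, …` are dense in the continuous maps from
`([-1,1]²)ⁿ` to `ℝ²`. Adding the terms one depth at a time multiplies fibres by connected sets, so
`X` is a continuum and its projection to the variables is monotone and onto `([-1,1]²)^κ`. Two pairs
of disjoint closed subsets of `X` are already disjoint in finitely many coordinates, hence are
separated by the signs of the two components of some `φ n k (v t₁, …, v tₙ)`, and so of its
direction. The zero sets of these two components are then disjoint partitions, because a direction
is a unit vector. Finally there are only `κ` terms, so `X` embeds in `[0,1]^κ`.
-/

open FirstOrder TopologicalSpace unitInterval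

section Connectedness

variable {X Y : Type*} [TopologicalSpace X] [TopologicalSpace Y]

theorem isConnected_preimage_subtypeVal_iff {K S : Set X} :
    IsConnected ((↑) ⁻¹' S : Set K) ↔ IsConnected (K ∩ S) := by
  rw [← Subtype.image_preimage_coe, IsConnected, IsConnected, image_nonempty,
    Topology.IsInducing.subtypeVal.isPreconnected_image]

theorem isConnected_of_isConnected_fibers [T2Space Y] {K : Set X} {S : Set Y} {f : X → Y}
    (hK : IsCompact K) (hS : IsConnected S) (hf : Continuous f) (hKS : MapsTo f K S)
    (hfib : ∀ y ∈ S, IsConnected (K ∩ f ⁻¹' {y})) : IsConnected K := by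
  have := isCompact_iff_compactSpace.1 hK
  have := isConnected_iff_connectedSpace.1 hS
  let g : K → S := hKS.restrict f K S
  have hg : Continuous g := hf.restrict hKS
  have hgfib (y : S) : IsConnected (g ⁻¹' {y}) := by
    have hpre : g ⁻¹' {y} = (↑) ⁻¹' (f ⁻¹' {(y : Y)}) := by
      ext x
      simp [g, Subtype.ext_iff]
    exact hpre ▸ isConnected_preimage_subtypeVal_iff.2 (hfib y y.2)
  have hquot := hg.isClosedMap.isQuotientMap hg fun y => (hgfib y).nonempty
  have huniv : IsConnected (univ : Set K) :=
    hquot.isCoinducing.isConnected_preimage_of_isClosed hgfib isClosed_univ isConnected_univ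
  exact isConnected_iff_connectedSpace.2 (connectedSpace_iff_univ.2 huniv)

theorem isConnected_iInter_of_directed [T2Space X] {ι : Type*} [Nonempty ι] {K : ι → Set X}
    (hdir : Directed (· ⊇ ·) K) (hc : ∀ i, IsCompact (K i)) (hconn : ∀ i, IsConnected (K i)) :
    IsConnected (⋂ i, K i) := by
  have hcl : IsClosed (⋂ i, K i) := isClosed_iInter fun i => (hc i).isClosed
  have hcomp : IsCompact (⋂ i, K i) :=
    (hc (Classical.arbitrary ι)).of_isClosed_subset hcl (iInter_subset K _)
  refine ⟨IsCompact.nonempty_iInter_of_directed_nonempty_isCompact_isClosed K hdir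
    (fun i => (hconn i).nonempty) hc (fun i => (hc i).isClosed), ?_⟩
  rw [isPreconnected_iff_subset_of_fully_disjoint_closed hcl]
  intro u v hu hv huv hdisj
  obtain ⟨U, V, hU, hV, huU, hvV, hUV⟩ :=
    SeparatedNhds.of_isCompact_isCompact (hcomp.inter_right hu) (hcomp.inter_right hv)
      (hdisj.mono inter_subset_right inter_subset_right)
  have hsub : ⋂ i, K i ⊆ U ∪ V := fun x hx =>
    (huv hx).imp (fun h => huU ⟨hx, h⟩) (fun h => hvV ⟨hx, h⟩)
  obtain ⟨i, hi⟩ := exists_subset_nhds_of_isCompact hdir hc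
    fun x hx => (hU.union hV).mem_nhds (hsub hx)
  refine ((hconn i).isPreconnected.subset_or_subset hU hV hUV hi).imp (fun h x hx => ?_)
    (fun h x hx => ?_)
  · exact (huv hx).resolve_right fun hxv =>
      disjoint_left.1 hUV (h (mem_iInter.1 hx i)) (hvV ⟨hx, hxv⟩)
  · exact (huv hx).resolve_left fun hxu =>
      disjoint_left.1 hUV (huU ⟨hx, hxu⟩) (h (mem_iInter.1 hx i))

end Connectedness

section ConstraintSystems

variable {T : Type*} {E : T → Type*}

/-- The solution set of a system of constraints: the points of a product whose `t`-th coordinate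
lies in a set `C t v`, which may depend on the other coordinates. -/
def constraintSet (C : ∀ t, (∀ s, E s) → Set (E t)) : Set (∀ t, E t) :=
  {v | ∀ t, v t ∈ C t v}

/-- The solution set of the constraints on the coordinates of rank less than `n`; the remaining
coordinates are free. -/
def constraintSetBelow (d : T → ℕ) (C : ∀ t, (∀ s, E s) → Set (E t)) (n : ℕ) : Set (∀ t, E t) :=
  {v | ∀ t, d t < n → v t ∈ C t v}

variable {d : T → ℕ} {C : ∀ t, (∀ s, E s) → Set (E t)}

theorem antitone_constraintSetBelow : Antitone (constraintSetBelow d C) :=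
  fun _ _ hmn _ hv t ht => hv t (ht.trans_le hmn)

theorem iInter_constraintSetBelow : ⋂ n, constraintSetBelow d C n = constraintSet C := by
  ext v
  simp only [mem_iInter]
  exact ⟨fun h t => h (d t + 1) t (Nat.lt_succ_self _), fun h _ t _ => h t⟩

/-- The factors of the fibre through `v` of the projection of `constraintSetBelow d C (n + 1)` to
the coordinates of rank less than `n`; this fibre is a product when constraints depend only on
coordinates of smaller rank. -/
def constraintFiber (d : T → ℕ) (C : ∀ t, (∀ s, E s) → Set (E t)) (n : ℕ) (v : ∀ t, E t)
    (t : T) : Set (E t) :=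
  open Classical in if d t < n then {v t} else if d t = n then C t v else univ

theorem constraintSetBelow_succ_inter_preimage_domRestrict
    (hdep : ∀ t v w, (∀ s, d s < d t → v s = w s) → C t v = C t w) {n : ℕ} {v : ∀ t, E t}
    (hv : v ∈ constraintSetBelow d C n) :
    constraintSetBelow d C (n + 1) ∩
        {t | d t < n}.domRestrict ⁻¹' {{t | d t < n}.domRestrict v} =
      univ.pi (constraintFiber d C n v) := by
  have hC {w : ∀ t, E t} (hw : ∀ s, d s < n → w s = v s) {t : T} (ht : d t ≤ n) :
      C t w = C t v :=
    hdep t w v fun s hs => hw s (hs.trans_le ht)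
  ext w
  simp only [mem_inter_iff, mem_preimage, mem_singleton_iff, mem_univ_pi,
    domRestrict_eq_iff, domRestrict_apply]
  constructor
  · rintro ⟨hw, hwv⟩ t
    unfold constraintFiber
    split_ifs with hlt heq
    · exact hwv t hlt
    · exact hC hwv heq.le ▸ hw t (by omega)
    · trivial
  · intro h
    have hwv : ∀ t, d t < n → w t = v t := fun t ht => by
      simpa [constraintFiber, ht] using h t
    refine ⟨fun t ht => ?_, hwv⟩
    rw [hC hwv (Nat.lt_succ_iff.1 ht)]
    obtain hlt | heq := (Nat.lt_succ_iff.1 ht).lt_or_eq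
    · exact hwv t hlt ▸ hv t hlt
    · simpa [constraintFiber, heq] using h t

variable [∀ t, TopologicalSpace (E t)]

theorem isClosed_constraintSet (hcl : ∀ t, IsClosed {v | v t ∈ C t v}) :
    IsClosed (constraintSet C) := by
  simpa only [constraintSet, ofPred_forall] using isClosed_iInter hcl

theorem isClosed_constraintSetBelow (hcl : ∀ t, IsClosed {v | v t ∈ C t v}) (n : ℕ) :
    IsClosed (constraintSetBelow d C n) := by
  simp only [constraintSetBelow, ofPred_forall]
  exact isClosed_iInter fun t => isClosed_iInter fun _ => hcl t

theorem isConnected_constraintFiber [∀ t, ConnectedSpace (E t)]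
    (hconn : ∀ t v, IsConnected (C t v)) (n : ℕ) (v : ∀ t, E t) (t : T) :
    IsConnected (constraintFiber d C n v t) := by
  unfold constraintFiber
  split_ifs
  exacts [isConnected_singleton, hconn t v, isConnected_univ]

variable [∀ t, T2Space (E t)] [∀ t, CompactSpace (E t)] [∀ t, ConnectedSpace (E t)]

theorem isConnected_constraintSetBelow (hcl : ∀ t, IsClosed {v | v t ∈ C t v})
    (hconn : ∀ t v, IsConnected (C t v))
    (hdep : ∀ t v w, (∀ s, d s < d t → v s = w s) → C t v = C t w) (n : ℕ) :
    IsConnected (constraintSetBelow d C n) := by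
  induction n with
  | zero => simpa [constraintSetBelow] using isConnected_univ
  | succ n ih =>
    have hrestrict : Continuous ({t | d t < n}.domRestrict (π := E)) := Pi.continuous_domRestrict _
    refine isConnected_of_isConnected_fibers (isClosed_constraintSetBelow hcl _).isCompact
      (ih.image _ hrestrict.continuousOn) hrestrict
      (fun v hv => mem_image_of_mem _ (antitone_constraintSetBelow n.le_succ hv)) ?_
    rintro _ ⟨v, hv, rfl⟩
    rw [constraintSetBelow_succ_inter_preimage_domRestrict hdep hv]
    exact isConnected_univ_pi.2 (isConnected_constraintFiber hconn n v)

theorem isConnected_constraintSet (hcl : ∀ t, IsClosed {v | v t ∈ C t v})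
    (hconn : ∀ t v, IsConnected (C t v))
    (hdep : ∀ t v w, (∀ s, d s < d t → v s = w s) → C t v = C t w) :
    IsConnected (constraintSet C) := by
  rw [← iInter_constraintSetBelow (d := d)]
  exact isConnected_iInter_of_directed antitone_constraintSetBelow.directed_ge
    (fun n => (isClosed_constraintSetBelow hcl n).isCompact)
    (isConnected_constraintSetBelow hcl hconn hdep)

end ConstraintSystems

section UnitDirections

variable {V : Type*} [NormedAddCommGroup V] [NormedSpace ℝ V]

/-- The unit vectors pointing in the direction of `z`; every unit vector when `z = 0`. -/
def unitDirections (z : V) : Set V :=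
  {w | ‖w‖ = 1 ∧ ‖z‖ • w = z}

theorem isConnected_unitDirections (hV : 1 < Module.rank ℝ V) (z : V) :
    IsConnected (unitDirections z) := by
  by_cases hz : z = 0
  · have : unitDirections z = Metric.sphere 0 1 := by
      ext w
      simp [unitDirections, hz]
    exact this ▸ isConnected_sphere hV 0 zero_le_one
  · have hz' : ‖z‖ ≠ 0 := norm_ne_zero_iff.2 hz
    have : unitDirections z = {‖z‖⁻¹ • z} := by
      ext w
      constructor
      · rintro ⟨-, hw⟩
        exact (eq_inv_smul_iff₀ hz').2 hw
      · rintro rfl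
        exact ⟨norm_smul_inv_norm hz, smul_inv_smul₀ hz' z⟩
    exact this ▸ isConnected_singleton

theorem isClosed_setOf_mem_unitDirections : IsClosed {p : V × V | p.2 ∈ unitDirections p.1} := by
  refine IsClosed.inter ?_ ?_
  · exact isClosed_eq (by fun_prop) continuous_const
  · exact isClosed_eq (by fun_prop) continuous_fst

end UnitDirections

section Centered

variable {ι : Type*}

/-- The affine bijection from the cube `[0,1]^ι` onto the cube `[-1,1]^ι`. -/
def centered (z : ι → I) : ι → ℝ :=
  fun i => 2 * (z i : ℝ) - 1

theorem continuous_centered : Continuous (centered (ι := ι)) := by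
  unfold centered
  fun_prop

theorem injective_centered : Function.Injective (centered (ι := ι)) := by
  intro z w h
  ext i
  have := congrFun h i
  simp only [centered] at this
  linarith

variable [Fintype ι]

theorem unitDirections_subset_range_centered (x : ι → ℝ) :
    unitDirections x ⊆ range centered := by
  rintro w ⟨hw, -⟩
  have hw' (i : ι) : |w i| ≤ 1 := hw ▸ norm_le_pi_norm w i
  refine ⟨fun i => ⟨(w i + 1) / 2, ?_⟩, ?_⟩
  · have := abs_le.1 (hw' i)
    constructor <;> linarith
  · ext i
    simp only [centered]
    ring

theorem isConnected_preimage_centered_unitDirections [Nontrivial ι] (x : ι → ℝ) :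
    IsConnected (centered ⁻¹' unitDirections x) := by
  have hrank : 1 < Module.rank ℝ (ι → ℝ) := by
    rw [rank_fun']
    exact_mod_cast Fintype.one_lt_card
  exact (isConnected_unitDirections hrank x).preimage_of_isClosedMap injective_centered
    continuous_centered.isClosedMap (unitDirections_subset_range_centered x)

theorem neg_of_mem_unitDirections {x w : ι → ℝ} (hw : w ∈ unitDirections x) {i : ι}
    (hx : x i < 0) : w i < 0 :=
  neg_of_mul_neg_right ((congrFun hw.2 i).trans_lt hx) (norm_nonneg x)

theorem pos_of_mem_unitDirections {x w : ι → ℝ} (hw : w ∈ unitDirections x) {i : ι}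
    (hx : 0 < x i) : 0 < w i :=
  pos_of_mul_pos_right (hx.trans_eq (congrFun hw.2 i).symm) (norm_nonneg x)

end Centered

section Terms

universe u v

/-- The nesting depth of a term; variables have depth `0`. -/
def termDepth {L : Language} {α : Type*} : L.Term α → ℕ
  | .var _ => 0
  | .func _ ts => (Finset.univ.sup fun i => termDepth (ts i)) + 1

theorem termDepth_lt_func {L : Language} {α : Type*} {n : ℕ} (f : L.Functions n)
    (ts : Fin n → L.Term α) (i : Fin n) : termDepth (ts i) < termDepth (.func f ts) :=
  Nat.lt_succ_of_le (Finset.le_sup (f := fun i => termDepth (ts i)) (Finset.mem_univ i))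

/-- The first-order language with operation symbols indexed by `ℕ` in each arity, and no
relations. -/
def directionLanguage : Language :=
  ⟨fun _ => ℕ, fun _ => Empty⟩

/-- The terms in the variables `J`, which index the coordinates of the direction space. -/
abbrev DirectionTerm (J : Type*) :=
  directionLanguage.Term J

open Cardinal in
theorem mk_directionTerm {J : Type u} [Infinite J] : #(DirectionTerm J) = #J := by
  have hsymbols : #(Σ n, directionLanguage.Functions n) ≤ ℵ₀ :=
    have : ∀ n, Countable (directionLanguage.Functions n) := fun _ => inferInstanceAs (Countable ℕ)
    mk_le_aleph0
  refine le_antisymm (Language.Term.card_le.trans ?_)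
    (mk_le_of_injective fun _ _ => Language.Term.var.inj)
  simp only [mk_sum, lift_uzero]
  exact max_le (aleph0_le_mk J)
    (add_le_of_le (aleph0_le_mk J) le_rfl ((lift_le_aleph0.2 hsymbols).trans (aleph0_le_mk J)))

open Cardinal in
theorem nonempty_homeomorph_pi {X : Type*} {ι : Type v} {T J : Type u} [TopologicalSpace X]
    [Finite ι] [Nonempty ι] [Infinite J] (hTJ : #T = #J) :
    Nonempty ((T → ι → X) ≃ₜ (J → X)) := by
  have hι : lift.{u} #ι < ℵ₀ := lift_lt_aleph0.2 (lt_aleph0_of_finite ι)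
  have hJ : ℵ₀ ≤ lift.{v} #J := aleph0_le_lift.2 (aleph0_le_mk J)
  have hcard : #(T × ι) = lift.{v} #J := by
    rw [mk_prod, hTJ]
    exact mul_eq_left hJ (hι.le.trans hJ) (by simp)
  obtain ⟨e⟩ := lift_mk_eq'.1 (by simp [hcard] : lift.{u} #(T × ι) = lift.{max u v} #J)
  exact ⟨Homeomorph.piCurry.symm.trans (Homeomorph.piCongrLeft (Y := fun _ => X) e)⟩

end Terms

section DirectionSpace

variable {ι : Type*} [Fintype ι] {J : Type*}

/-- The constraints defining the direction space: a variable `j` is sent into `b j`, and a term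
formed by the `k`-th operation of arity `n` is sent to a direction of the value, at its arguments,
of the `k`-th map in a dense sequence of continuous maps to `ℝ^ι`. -/
noncomputable def directionConstraint (b : J → Set (ι → I)) :
    DirectionTerm J → (DirectionTerm J → ι → I) → Set (ι → I)
  | .var j, _ => b j
  | @Language.Term.func _ _ n k ts, v =>
    centered ⁻¹' unitDirections (denseSeq C(Fin n → ι → I, ι → ℝ) k (v ∘ ts))

/-- The space of all assignments of points of the cube to terms which satisfy the direction
constraints and send the variable `j` into `b j`. -/
def directionSpace (b : J → Set (ι → I)) : Set (DirectionTerm J → ι → I) :=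
  constraintSet (directionConstraint b)

variable {b : J → Set (ι → I)}

theorem isClosed_directionConstraint (hb : ∀ j, IsClosed (b j)) :
    ∀ t, IsClosed {v | v t ∈ directionConstraint b t v}
  | .var j => (hb j).preimage (continuous_apply _)
  | @Language.Term.func _ _ n k ts => by
    have hpair : Continuous fun v : DirectionTerm J → ι → I =>
        (denseSeq C(Fin n → ι → I, ι → ℝ) k (v ∘ ts), centered (v (.func k ts))) :=
      .prodMk (by fun_prop) (continuous_centered.comp (continuous_apply _))
    exact isClosed_setOf_mem_unitDirections.preimage hpair

theorem isConnected_directionConstraint [Nontrivial ι] (hb : ∀ j, IsConnected (b j)) :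
    ∀ t v, IsConnected (directionConstraint b t v)
  | .var j, _ => hb j
  | .func _ _, _ => isConnected_preimage_centered_unitDirections _

theorem directionConstraint_congr :
    ∀ t v w, (∀ s, termDepth s < termDepth t → v s = w s) →
      directionConstraint b t v = directionConstraint b t w
  | .var _, _, _, _ => rfl
  | .func k ts, v, w, h => by
    have hts : v ∘ ts = w ∘ ts := funext fun i => h _ (termDepth_lt_func k ts i)
    simp only [directionConstraint, hts]

theorem isClosed_directionSpace (hb : ∀ j, IsClosed (b j)) : IsClosed (directionSpace b) :=
  isClosed_constraintSet (isClosed_directionConstraint hb)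

theorem isConnected_directionSpace [Nontrivial ι] (hcl : ∀ j, IsClosed (b j))
    (hconn : ∀ j, IsConnected (b j)) : IsConnected (directionSpace b) :=
  isConnected_constraintSet (isClosed_directionConstraint hcl)
    (isConnected_directionConstraint hconn) directionConstraint_congr

theorem directionSpace_univ_inter_preimage_var (y : J → ι → I) :
    directionSpace (fun _ => univ) ∩ (fun v j => v (.var j)) ⁻¹' {y} =
      directionSpace fun j => {y j} := by
  ext v
  constructor
  · rintro ⟨hv, rfl⟩ (_ | ⟨k, ts⟩)
    exacts [rfl, hv (.func k ts)]
  · intro hv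
    refine ⟨?_, funext fun j => hv (.var j)⟩
    rintro (_ | ⟨k, ts⟩)
    exacts [trivial, hv (.func k ts)]

/-- The projection of the direction space over arbitrary variables to the values of the
variables. -/
def variableProjection (v : directionSpace fun _ : J => (univ : Set (ι → I))) : J → ι → I :=
  fun j => v.1 (.var j)

theorem continuous_variableProjection : Continuous (variableProjection (ι := ι) (J := J)) :=
  continuous_pi fun _ => (continuous_apply _).comp continuous_subtype_val

theorem isConnected_preimage_variableProjection [Nontrivial ι] (y : J → ι → I) :
    IsConnected (variableProjection ⁻¹' {y}) := by
  have hfib := isConnected_directionSpace (b := fun j => {y j}) (fun _ => isClosed_singleton)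
    fun _ => isConnected_singleton
  rw [← directionSpace_univ_inter_preimage_var] at hfib
  exact isConnected_preimage_subtypeVal_iff.2 hfib

end DirectionSpace

section Separation

theorem exists_finset_separating {Z T : Type*} {E : T → Type*} [TopologicalSpace Z]
    [∀ t, TopologicalSpace (E t)] [∀ t, T2Space (E t)] {δ : Z → ∀ t, E t} (hδ : Continuous δ)
    (hinj : Function.Injective δ) {A B : Set Z} (hA : IsCompact A) (hB : IsCompact B)
    (hAB : Disjoint A B) : ∃ F : Finset T, ∀ a ∈ A, ∀ b ∈ B, ∃ t ∈ F, δ a t ≠ δ b t := by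
  have hclosed (t : T) : IsClosed {p : Z × Z | δ p.1 t = δ p.2 t} :=
    isClosed_eq (by fun_prop) (by fun_prop)
  have hempty : A ×ˢ B ∩ ⋂ t, {p : Z × Z | δ p.1 t = δ p.2 t} = ∅ := by
    refine eq_empty_of_forall_notMem ?_
    rintro ⟨a, b⟩ ⟨⟨ha, hb⟩, h⟩
    have hab : a = b := hinj (funext (mem_iInter.1 h))
    exact disjoint_left.1 hAB ha (hab ▸ hb)
  obtain ⟨F, hF⟩ := (hA.prod hB).elim_finite_subfamily_closed _ hclosed hempty
  refine ⟨F, fun a ha b hb => ?_⟩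
  by_contra! h
  exact eq_empty_iff_forall_notMem.1 hF (a, b) ⟨⟨ha, hb⟩, mem_iInter₂.2 h⟩

theorem exists_tuple_disjoint_image {Z T ι E : Type*} [Finite ι] [TopologicalSpace Z]
    [TopologicalSpace E] [T2Space E] {δ : Z → T → E} (hδ : Continuous δ)
    (hinj : Function.Injective δ) {A B : ι → Set Z} (hA : ∀ i, IsCompact (A i))
    (hB : ∀ i, IsCompact (B i)) (hAB : ∀ i, Disjoint (A i) (B i)) :
    ∃ (n : ℕ) (ts : Fin n → T),
      ∀ i, Disjoint ((fun z => δ z ∘ ts) '' A i) ((fun z => δ z ∘ ts) '' B i) := by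
  classical
  have := Fintype.ofFinite ι
  choose F hF using fun i => exists_finset_separating hδ hinj (hA i) (hB i) (hAB i)
  let G := Finset.univ.biUnion F
  refine ⟨G.card, fun m => G.equivFin.symm m, fun i => disjoint_left.2 ?_⟩
  rintro _ ⟨a, ha, rfl⟩ ⟨b, hb, hab⟩
  obtain ⟨t, ht, hne⟩ := hF i a ha b hb
  have htG : t ∈ G := Finset.mem_biUnion.2 ⟨i, Finset.mem_univ i, ht⟩
  exact hne (by simpa using (congrFun hab (G.equivFin ⟨t, htG⟩)).symm)

theorem exists_separating_of_denseRange_s9 {Y ι κ : Type*} [TopologicalSpace Y] [CompactSpace Y]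
    [NormalSpace Y] [Finite ι] {u : κ → C(Y, ι → ℝ)} (hu : DenseRange u) {A B : ι → Set Y}
    (hA : ∀ i, IsClosed (A i)) (hB : ∀ i, IsClosed (B i)) (hAB : ∀ i, Disjoint (A i) (B i)) :
    ∃ k, ∀ i, (∀ a ∈ A i, u k a i < 0) ∧ ∀ b ∈ B i, 0 < u k b i := by
  have := Fintype.ofFinite ι
  choose f hfA hfB _ using fun i => exists_bounded_mem_Icc_of_closed_of_le (hA i) (hB i) (hAB i)
    (neg_le_self zero_le_one : (-1 : ℝ) ≤ 1)
  obtain ⟨k, hk⟩ := hu.exists_dist_lt (ContinuousMap.pi fun i => (f i).toContinuousMap) one_pos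
  have hclose (y : Y) (i : ι) : |f i y - u k y i| < 1 :=
    (dist_le_pi_dist _ _ i).trans_lt (((ContinuousMap.dist_apply_le_dist y)).trans_lt hk)
  refine ⟨k, fun i => ⟨fun a ha => ?_, fun b hb => ?_⟩⟩
  · have hfa : f i a = -1 := hfA i ha
    linarith [(abs_lt.1 (hclose a i)).1]
  · have hfb : f i b = 1 := hfB i hb
    linarith [(abs_lt.1 (hclose b i)).2]

theorem isPartitionBetween_zero {Z : Type*} [TopologicalSpace Z] {f : Z → ℝ} (hf : Continuous f)
    {A B : Set Z} (hA : ∀ z ∈ A, f z < 0) (hB : ∀ z ∈ B, 0 < f z) :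
    IsPartitionBetween {z | f z = 0} A B := by
  refine ⟨isClosed_eq hf continuous_const, {z | f z < 0}, {z | 0 < f z},
    isOpen_lt hf continuous_const, isOpen_lt continuous_const hf, ?_, hA, hB, ?_⟩
  · exact disjoint_left.2 fun z (hneg : f z < 0) => hneg.not_gt
  · ext z
    exact lt_or_lt_iff_ne.symm

variable {Z ι J : Type*} [TopologicalSpace Z] [CompactSpace Z] [Fintype ι] {b : J → Set (ι → I)}
  {δ : Z → DirectionTerm J → ι → I}

theorem exists_term_separating (hδ : Continuous δ) (hinj : Function.Injective δ)
    (hmem : ∀ z, δ z ∈ directionSpace b) {A B : ι → Set Z} (hA : ∀ i, IsClosed (A i))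
    (hB : ∀ i, IsClosed (B i)) (hAB : ∀ i, Disjoint (A i) (B i)) :
    ∃ t, (∀ z, ‖centered (δ z t)‖ = 1) ∧
      ∀ i, (∀ a ∈ A i, centered (δ a t) i < 0) ∧ ∀ b ∈ B i, 0 < centered (δ b t) i := by
  obtain ⟨n, ts, hts⟩ := exists_tuple_disjoint_image hδ hinj (fun i => (hA i).isCompact)
    (fun i => (hB i).isCompact) hAB
  have hcont : Continuous fun z => δ z ∘ ts := by fun_prop
  obtain ⟨k, hk⟩ := exists_separating_of_denseRange_s9
    (denseRange_denseSeq C(Fin n → ι → I, ι → ℝ))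
    (fun i => ((hA i).isCompact.image hcont).isClosed)
    (fun i => ((hB i).isCompact.image hcont).isClosed) hts
  have hdir (z : Z) := hmem z (.func k ts)
  exact ⟨.func k ts, fun z => (hdir z).1, fun i =>
    ⟨fun z hz => neg_of_mem_unitDirections (hdir z) ((hk i).1 _ (mem_image_of_mem _ hz)),
      fun z hz => pos_of_mem_unitDirections (hdir z) ((hk i).2 _ (mem_image_of_mem _ hz))⟩⟩

theorem not_isEssentialFamily_of_injective_directionSpace (hδ : Continuous δ)
    (hinj : Function.Injective δ) (hmem : ∀ z, δ z ∈ directionSpace b) (A B : ι → Set Z) :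
    ¬ IsEssentialFamily A B := by
  rintro ⟨hA, hB, hAB, hess⟩
  obtain ⟨t, hnorm, hsep⟩ := exists_term_separating hδ hinj hmem hA hB hAB
  have hcont : Continuous fun z => centered (δ z t) :=
    continuous_centered.comp ((continuous_apply t).comp hδ)
  obtain ⟨z, hz⟩ := hess (fun i => {z | centered (δ z t) i = 0}) fun i =>
    isPartitionBetween_zero ((continuous_apply i).comp hcont) (hsep i).1 (hsep i).2
  have hzero : centered (δ z t) = 0 := funext fun i => mem_iInter.1 hz i
  simpa [hzero] using hnorm z

end Separation

/-- For every infinite cardinal `κ` there is a subcontinuum of the Tychonoff cube of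
covering dimension at most one which maps onto the cube by a monotone map. -/
theorem exists_one_dimensional_monotone_preimage_of_cube
    (κ : Cardinal) (hκ : Cardinal.aleph0 ≤ κ) :
    ∃ U : Set (κ.out → unitInterval), IsCompact U ∧ IsConnected U ∧
      (¬ ∃ A B : Fin 2 → Set ↥U, IsEssentialFamily A B) ∧
      ∃ m : ↥U → (κ.out → unitInterval), Continuous m ∧ Function.Surjective m ∧
        ∀ y : κ.out → unitInterval, IsConnected (m ⁻¹' {y}) := by
  have : Infinite κ.out := by rwa [Cardinal.infinite_iff, Cardinal.mk_out]
  let X := directionSpace fun _ : κ.out => (univ : Set (Fin 2 → I))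
  have hX : IsClosed X := isClosed_directionSpace fun _ => isClosed_univ
  have hXconn : IsConnected X :=
    isConnected_directionSpace (fun _ => isClosed_univ) fun _ => isConnected_univ
  obtain ⟨h⟩ := nonempty_homeomorph_pi (X := I) (ι := Fin 2) (mk_directionTerm (J := κ.out))
  obtain ⟨k⟩ := nonempty_homeomorph_pi (X := I) (ι := Fin 2) (T := κ.out) rfl
  let e : X ≃ₜ h '' X := h.image X
  have hU : IsCompact (h '' X) := hX.isCompact.image h.continuous
  have hfib (y : κ.out → I) : IsConnected ((k ∘ variableProjection ∘ e.symm) ⁻¹' {y}) := by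
    rw [preimage_comp, preimage_comp, ← k.image_symm, image_singleton, e.symm.isConnected_preimage]
    exact isConnected_preimage_variableProjection (k.symm y)
  have := isCompact_iff_compactSpace.1 hU
  refine ⟨h '' X, hU, hXconn.image h h.continuous.continuousOn, fun ⟨A, B, hAB⟩ => ?_,
    k ∘ variableProjection ∘ e.symm,
    k.continuous.comp (continuous_variableProjection.comp e.symm.continuous),
    fun y => (hfib y).nonempty, hfib⟩
  exact not_isEssentialFamily_of_injective_directionSpace
    (continuous_subtype_val.comp e.symm.continuous)
    (Subtype.val_injective.comp e.symm.injective) (fun u => (e.symm u).2) A B hAB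
end
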